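/- Let n ≥ 1 and let Ω ⊊ ℝⁿ be a nonempty open set with d(x) := dist(x, ℝⁿ∖Ω) and finite inner radius R := sup_{x ∈ Ω} d(x) < ∞. Then for every s > n and every u ∈ C_c^∞(Ω), one has ∫_Ω |∇u| / d^{s−1} dx − (s−n) · ∫_Ω |u| / d^s dx ≥ (1/R^{s−n}) · ∫_Ω |∇u| / d^{n−1} dx. -/

import Mathlib

open MeasureTheory Metric Set

/-!
Let `d` be the distance to a closed set `C` on which `u` vanishes, in dimension `n`. Almost every
`x` has a nearest point `p x` in `C`, depending measurably on `x`, and integrating `∇u` along the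
segment from `p x` to `x` bounds `|u x|` by `d x` times the mean of `|∇u|` on that segment. The map
`x ↦ p x + t (x - p x)` multiplies `d` by `t` and, the nearest-point projection being monotone,
contracts distances by a factor at least `t`; hence it pushes Lebesgue measure to at most `t⁻ⁿ`
times Lebesgue measure. By Tonelli, `∫ |u| w(d) ≤ ∫ |∇u| W(d)` for every weight `w`, where
`W r = r ^ (1 - n) ∫_r^∞ ρ ^ (n - 1) w ρ dρ`. As `d ≤ R`, one may take `w ρ = ρ ^ (-s)` for `ρ ≤ R`
and `w ρ = 0` beyond; the cut-off at `R` is what produces the remainder: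
`(s - n) W r = r ^ (1 - s) - R ^ (n - s) r ^ (1 - n)`.
-/

open Module AffineMap
open scoped ENNReal NNReal Gradient

/-- `q` is a point of `C` nearest to `x`. -/
structure IsNearestPoint {X : Type*} [PseudoMetricSpace X] (C : Set X) (x q : X) : Prop where
  mem : q ∈ C
  infDist_eq : infDist x C = dist x q

namespace IsNearestPoint

section Segment

variable {V P : Type*} [SeminormedAddCommGroup V] [NormedSpace ℝ V] [PseudoMetricSpace P]
  [NormedAddTorsor V P] {C : Set P} {x q : P}

theorem infDist_lineMap (h : IsNearestPoint C x q) {t : ℝ} (ht : t ∈ Icc 0 1) :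
    infDist (lineMap q x t) C = t * infDist x C := by
  have upper : infDist (lineMap q x t) C ≤ t * dist x q := by
    simpa [dist_lineMap_left, abs_of_nonneg ht.1, dist_comm q x] using
      infDist_le_dist_of_mem (x := lineMap q x t) h.mem
  have lower : infDist x C ≤ infDist (lineMap q x t) C + (1 - t) * dist x q := by
    simpa [dist_right_lineMap, abs_of_nonneg (sub_nonneg.2 ht.2), dist_comm q x] using
      infDist_le_infDist_add_dist (s := C) (x := x) (y := lineMap q x t)
  rw [h.infDist_eq] at lower ⊢
  linarith

end Segment

theorem fderiv_infDist_sub {E : Type*} [NormedAddCommGroup E] [NormedSpace ℝ E] {C : Set E}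
    {x q : E} (h : IsNearestPoint C x q) (hd : DifferentiableAt ℝ (infDist · C) x) :
    fderiv ℝ (infDist · C) x (x - q) = infDist x C := by
  have along_segment : HasDerivAt (fun t : ℝ => infDist (lineMap q x t) C)
      (fderiv ℝ (infDist · C) x (x - q)) 1 :=
    HasFDerivAt.comp_hasDerivAt (1 : ℝ) (l := (infDist · C)) (f := lineMap q x)
      (by rw [lineMap_apply_one]; exact hd.hasFDerivAt) hasDerivAt_lineMap
  have linear : HasDerivWithinAt (fun t : ℝ => infDist (lineMap q x t) C)
      (infDist x C) (Icc 0 1) 1 :=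
    (hasDerivAt_mul_const (infDist x C)).hasDerivWithinAt.congr_of_mem
      (fun _ ht => h.infDist_lineMap ht) (right_mem_Icc.2 zero_le_one)
  exact (uniqueDiffOn_Icc zero_lt_one 1 (right_mem_Icc.2 zero_le_one)).eq_deriv _
    along_segment.hasDerivWithinAt linear

section InnerProductSpace

variable {E : Type*} [NormedAddCommGroup E] [InnerProductSpace ℝ E] {C : Set E} {x y p q : E}

theorem inner_sub_sub_nonneg (hp : IsNearestPoint C x p) (hq : IsNearestPoint C y q) :
    0 ≤ inner ℝ (x - y) (p - q) := by
  have hx : dist x p ^ 2 ≤ dist x q ^ 2 := by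
    gcongr; exact hp.infDist_eq ▸ infDist_le_dist_of_mem hq.mem
  have hy : dist y q ^ 2 ≤ dist y p ^ 2 := by
    gcongr; exact hq.infDist_eq ▸ infDist_le_dist_of_mem hp.mem
  simp only [dist_eq_norm, norm_sub_sq_real] at hx hy
  simp only [inner_sub_left, inner_sub_right]
  linarith

theorem mul_dist_le_dist_lineMap (hp : IsNearestPoint C x p) (hq : IsNearestPoint C y q)
    {t : ℝ} (ht : t ≤ 1) : t * dist x y ≤ dist (lineMap p x t) (lineMap q y t) := by
  rcases (dist_nonneg (x := x) (y := y)).eq_or_lt with hxy | hxy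
  · simp only [← hxy, mul_zero, dist_nonneg]
  refine le_of_mul_le_mul_right ?_ hxy
  have split : lineMap p x t - lineMap q y t = (1 - t) • (p - q) + t • (x - y) := by
    simp only [lineMap_apply_module]; module
  calc t * dist x y * dist x y
      ≤ (1 - t) * inner ℝ (x - y) (p - q) + t * dist x y * dist x y :=
        le_add_of_nonneg_left (mul_nonneg (sub_nonneg.2 ht) (hp.inner_sub_sub_nonneg hq))
    _ = inner ℝ (x - y) (lineMap p x t - lineMap q y t) := by
        rw [split, inner_add_right, inner_smul_right, inner_smul_right,
          real_inner_self_eq_norm_mul_norm, dist_eq_norm, mul_assoc]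
    _ ≤ dist (lineMap p x t) (lineMap q y t) * dist x y := by
        rw [dist_eq_norm, dist_eq_norm, mul_comm]
        exact real_inner_le_norm _ _

end InnerProductSpace

end IsNearestPoint

theorem norm_smul_eq_of_inner_eq_norm {E : Type*} [NormedAddCommGroup E] [InnerProductSpace ℝ E]
    {v w : E} (hw : ‖w‖ ≤ 1) (h : inner ℝ w v = ‖v‖) : ‖v‖ • w = v := by
  have norm_sq_le : ‖‖v‖ • w - v‖ ^ 2 ≤ 0 := by
    calc ‖‖v‖ • w - v‖ ^ 2 = ‖v‖ ^ 2 * (‖w‖ ^ 2 - 1) := by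
          rw [norm_sub_sq_real, real_inner_smul_left, h, norm_smul, norm_norm]; ring
      _ ≤ 0 := mul_nonpos_of_nonneg_of_nonpos (sq_nonneg _)
          (sub_nonpos.2 (pow_le_one₀ (norm_nonneg w) hw))
  simpa [sub_eq_zero] using le_antisymm norm_sq_le (sq_nonneg _)

section NearestPointProjection

variable {E : Type*} [NormedAddCommGroup E] [InnerProductSpace ℝ E] {C : Set E}

theorem IsNearestPoint.infDist_smul_gradient [CompleteSpace E] {x q : E}
    (h : IsNearestPoint C x q) (hd : DifferentiableAt ℝ (infDist · C) x) :
    infDist x C • ∇ (infDist · C) x = x - q := by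
  have norm_le : ‖∇ (infDist · C) x‖ ≤ 1 := by
    rw [gradient, LinearIsometryEquiv.norm_map]
    simpa using norm_fderiv_le_of_lipschitz ℝ (lipschitz_infDist_pt C) (x₀ := x)
  have inner_eq : inner ℝ (∇ (infDist · C) x) (x - q) = ‖x - q‖ := by
    rw [gradient, InnerProductSpace.toDual_symm_apply, h.fderiv_infDist_sub hd, h.infDist_eq,
      dist_eq_norm]
  rw [h.infDist_eq, dist_eq_norm]
  exact norm_smul_eq_of_inner_eq_norm norm_le inner_eq

variable [FiniteDimensional ℝ E] [MeasurableSpace E] [BorelSpace E]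
  (μ : Measure E) [μ.IsAddHaarMeasure]

-- Where `d = infDist · C` is differentiable, every nearest point equals `x - d x • ∇ d x`.
theorem exists_measurable_ae_isNearestPoint (hC : IsClosed C) (hne : C.Nonempty) :
    ∃ p : E → E, Measurable p ∧ ∀ᵐ x ∂μ, IsNearestPoint C x (p x) := by
  refine ⟨fun x => x - infDist x C • ∇ (infDist · C) x, ?_, ?_⟩
  · have : Measurable (∇ (infDist · C)) :=
      (InnerProductSpace.toDual ℝ E).symm.continuous.measurable.comp (measurable_fderiv ℝ _)
    exact measurable_id.sub ((continuous_infDist_pt C).measurable.smul this)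
  · filter_upwards [(lipschitz_infDist_pt C).ae_differentiableAt] with x hx
    obtain ⟨q, hq, hxq⟩ := hC.exists_infDist_eq_dist hne x
    have nearest : IsNearestPoint C x q := ⟨hq, hxq⟩
    rwa [nearest.infDist_smul_gradient hx, sub_sub_cancel]

end NearestPointProjection

section Transport

theorem addHaar_le_mul_image_of_antilipschitzWith {E : Type*} [NormedAddCommGroup E]
    [NormedSpace ℝ E] [FiniteDimensional ℝ E] [MeasurableSpace E] [BorelSpace E] (μ : Measure E)
    [μ.IsAddHaarMeasure] {K : ℝ≥0} {f : E → E} {s : Set E}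
    (hf : AntilipschitzWith K (s.domRestrict f)) :
    μ s ≤ (K : ℝ≥0∞) ^ finrank ℝ E * μ (f '' s) := by
  have hausdorff := hf.le_hausdorffMeasure_image (finrank ℝ E).cast_nonneg univ
  rw [← isometry_subtype_coe.hausdorffMeasure_image (Or.inl (finrank ℝ E).cast_nonneg), image_univ,
    image_univ, Subtype.range_coe, range_domRestrict, ENNReal.rpow_natCast] at hausdorff
  rw [μ.isAddLeftInvariant_eq_smul (μH[finrank ℝ E])]
  simp only [Measure.smul_apply, ENNReal.smul_def, smul_eq_mul]
  rw [mul_left_comm]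
  gcongr

theorem map_addHaar_le_smul {E : Type*} [NormedAddCommGroup E] [NormedSpace ℝ E]
    [FiniteDimensional ℝ E] [MeasurableSpace E] [BorelSpace E] {μ : Measure E}
    [μ.IsAddHaarMeasure] {K : ℝ≥0} {f : E → E} (hf : Measurable f) {G : Set E} (hG : G ∈ ae μ)
    (hfG : AntilipschitzWith K (G.domRestrict f)) :
    μ.map f ≤ (K : ℝ≥0∞) ^ finrank ℝ E • μ := by
  refine Measure.le_iff.2 fun A hA => ?_
  have : AntilipschitzWith K ((f ⁻¹' A ∩ G).domRestrict f) :=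
    fun x y => hfG ⟨x, x.2.2⟩ ⟨y, y.2.2⟩
  calc μ.map f A = μ (f ⁻¹' A ∩ G) := by
        rw [Measure.map_apply hf hA, measure_inter_conull hG]
    _ ≤ (K : ℝ≥0∞) ^ finrank ℝ E * μ (f '' (f ⁻¹' A ∩ G)) :=
        addHaar_le_mul_image_of_antilipschitzWith μ this
    _ ≤ (K : ℝ≥0∞) ^ finrank ℝ E * μ A := by
        gcongr
        exact (image_mono inter_subset_left).trans (image_preimage_subset f A)

variable {E : Type*} [NormedAddCommGroup E] [InnerProductSpace ℝ E] [FiniteDimensional ℝ E]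
  [MeasurableSpace E] [BorelSpace E] {μ : Measure E} [μ.IsAddHaarMeasure] {C : Set E} {p : E → E}

theorem map_lineMap_le_smul (hp : Measurable p) (hpC : ∀ᵐ x ∂μ, IsNearestPoint C x (p x))
    {t : ℝ} (ht : t ∈ Ioc 0 1) :
    μ.map (fun x => lineMap (p x) x t) ≤ ENNReal.ofReal t⁻¹ ^ finrank ℝ E • μ := by
  refine map_addHaar_le_smul (by simp only [lineMap_apply_module]; fun_prop) hpC ?_
  refine AntilipschitzWith.of_le_mul_dist fun x y => ?_
  rw [Real.coe_toNNReal _ (inv_nonneg.2 ht.1.le), ← div_eq_inv_mul, le_div_iff₀' ht.1]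
  exact x.2.mul_dist_le_dist_lineMap y.2 ht.2

theorem lintegral_lineMap_le (hp : Measurable p) (hpC : ∀ᵐ x ∂μ, IsNearestPoint C x (p x))
    {t : ℝ} (ht : t ∈ Ioc 0 1) {f : E → ℝ≥0∞} (hf : Measurable f) :
    ∫⁻ x, f (lineMap (p x) x t) ∂μ ≤ ENNReal.ofReal t⁻¹ ^ finrank ℝ E * ∫⁻ y, f y ∂μ := by
  have hT : Measurable fun x => lineMap (p x) x t := by
    simp only [lineMap_apply_module]; fun_prop
  calc ∫⁻ x, f (lineMap (p x) x t) ∂μ = ∫⁻ y, f y ∂μ.map (fun x => lineMap (p x) x t) :=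
        (lintegral_map hf hT).symm
    _ ≤ ∫⁻ y, f y ∂(ENNReal.ofReal t⁻¹ ^ finrank ℝ E • μ) :=
        lintegral_mono' (map_lineMap_le_smul hp hpC ht) le_rfl
    _ = ENNReal.ofReal t⁻¹ ^ finrank ℝ E * ∫⁻ y, f y ∂μ := lintegral_smul_measure _ f

theorem lintegral_lintegral_lineMap_le (hp : Measurable p)
    (hpC : ∀ᵐ x ∂μ, IsNearestPoint C x (p x)) {F : ℝ → E → ℝ≥0∞}
    (hF : Measurable (Function.uncurry F)) :
    ∫⁻ x, (∫⁻ t in Ioc (0 : ℝ) 1, F t (lineMap (p x) x t)) ∂μ ≤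
      ∫⁻ y, (∫⁻ t in Ioc (0 : ℝ) 1, ENNReal.ofReal t⁻¹ ^ finrank ℝ E * F t y) ∂μ := by
  have measurable_lineMap : Measurable fun z : ℝ × E => lineMap (p z.2) z.2 z.1 := by
    simp only [lineMap_apply_module]; fun_prop
  calc ∫⁻ x, (∫⁻ t in Ioc (0 : ℝ) 1, F t (lineMap (p x) x t)) ∂μ
      = ∫⁻ t in Ioc (0 : ℝ) 1, ∫⁻ x, F t (lineMap (p x) x t) ∂μ :=
        (lintegral_lintegral_swap (f := fun t x => F t (lineMap (p x) x t))
          (hF.comp (measurable_fst.prodMk measurable_lineMap)).aemeasurable).symm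
    _ ≤ ∫⁻ t in Ioc (0 : ℝ) 1, ∫⁻ y, ENNReal.ofReal t⁻¹ ^ finrank ℝ E * F t y ∂μ := by
        refine setLIntegral_mono' measurableSet_Ioc fun t ht => ?_
        have hFt : Measurable (F t) := hF.comp measurable_prodMk_left
        rw [lintegral_const_mul _ hFt]
        exact lintegral_lineMap_le hp hpC ht hFt
    _ = ∫⁻ y, (∫⁻ t in Ioc (0 : ℝ) 1, ENNReal.ofReal t⁻¹ ^ finrank ℝ E * F t y) ∂μ :=
        lintegral_lintegral_swap
          (f := fun t y => ENNReal.ofReal t⁻¹ ^ finrank ℝ E * F t y)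
          ((measurable_fst.inv.ennreal_ofReal.pow_const _).mul hF).aemeasurable

end Transport

section WeightedHardy

theorem enorm_sub_le_lintegral_enorm_fderiv_lineMap {E F : Type*} [NormedAddCommGroup E]
    [NormedSpace ℝ E] [NormedAddCommGroup F] [NormedSpace ℝ F] {u : E → F} (hu : ContDiff ℝ 1 u)
    (q x : E) :
    ‖u x - u q‖ₑ ≤ ∫⁻ t in Ioc (0 : ℝ) 1, ‖fderiv ℝ u (lineMap q x t)‖ₑ * ‖x - q‖ₑ := by
  have contDiff_comp : ContDiff ℝ 1 fun t : ℝ => u (lineMap q x t) := by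
    simp only [lineMap_apply_module]; fun_prop
  have deriv_comp (t : ℝ) :
      deriv (fun t : ℝ => u (lineMap q x t)) t = fderiv ℝ u (lineMap q x t) (x - q) :=
    ((hu.differentiable one_ne_zero _).hasFDerivAt.comp_hasDerivAt t hasDerivAt_lineMap).deriv
  calc ‖u x - u q‖ₑ
      ≤ ∫⁻ t in Icc (0 : ℝ) 1, ‖deriv (fun t : ℝ => u (lineMap q x t)) t‖ₑ := by
        simpa using enorm_sub_le_lintegral_deriv_of_contDiffOn_Icc contDiff_comp.contDiffOn
          zero_le_one
    _ = ∫⁻ t in Ioc (0 : ℝ) 1, ‖fderiv ℝ u (lineMap q x t) (x - q)‖ₑ := by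
        simp only [deriv_comp, restrict_Ioc_eq_restrict_Icc]
    _ ≤ ∫⁻ t in Ioc (0 : ℝ) 1, ‖fderiv ℝ u (lineMap q x t)‖ₑ * ‖x - q‖ₑ :=
        lintegral_mono fun t => (fderiv ℝ u (lineMap q x t)).le_opENorm _

variable {E F : Type*} [NormedAddCommGroup E] [NormedAddCommGroup F] [NormedSpace ℝ F] {u : E → F}
  {C : Set E}

theorem IsNearestPoint.enorm_mul_le_lintegral [NormedSpace ℝ E] {x q : E}
    (h : IsNearestPoint C x q) (hu : ContDiff ℝ 1 u) (huq : u q = 0) (w : ℝ → ℝ≥0∞) :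
    ‖u x‖ₑ * w (infDist x C) ≤ ∫⁻ t in Ioc (0 : ℝ) 1, ‖fderiv ℝ u (lineMap q x t)‖ₑ *
      (ENNReal.ofReal (infDist (lineMap q x t) C / t) * w (infDist (lineMap q x t) C / t)) := by
  have dist_ofReal : ‖x - q‖ₑ = ENNReal.ofReal (infDist x C) := by
    rw [h.infDist_eq, dist_eq_norm, ofReal_norm]
  calc ‖u x‖ₑ * w (infDist x C)
      ≤ (∫⁻ t in Ioc (0 : ℝ) 1, ‖fderiv ℝ u (lineMap q x t)‖ₑ * ‖x - q‖ₑ) * w (infDist x C) := by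
        gcongr
        simpa only [huq, sub_zero] using enorm_sub_le_lintegral_enorm_fderiv_lineMap hu q x
    _ ≤ ∫⁻ t in Ioc (0 : ℝ) 1, ‖fderiv ℝ u (lineMap q x t)‖ₑ * ‖x - q‖ₑ * w (infDist x C) :=
        lintegral_mul_const_le _ _
    _ = _ := by
        refine setLIntegral_congr_fun measurableSet_Ioc fun t ht => ?_
        simp only [h.infDist_lineMap (Ioc_subset_Icc_self ht), mul_div_cancel_left₀ _ ht.1.ne',
          dist_ofReal, mul_assoc]

/-- The weight that a weight `w` on functions induces on their gradients: `w (d x)` is paid at every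
point `x` whose segment to its nearest point passes through a point at distance `r`, that is, at
`d x = r / t` with `t ∈ (0, 1]`, and the contraction by the ratio `t` has Jacobian at least `t ^ n`.
For `r > 0` it equals `r ^ (1 - n) * ∫ ρ in Ici r, ρ ^ (n - 1) * w ρ`. -/
noncomputable def gradientWeight (n : ℕ) (w : ℝ → ℝ≥0∞) (r : ℝ) : ℝ≥0∞ :=
  ∫⁻ t in Ioc (0 : ℝ) 1, ENNReal.ofReal t⁻¹ ^ n * (ENNReal.ofReal (r / t) * w (r / t))

theorem lintegral_enorm_mul_infDist_le [InnerProductSpace ℝ E] [FiniteDimensional ℝ E]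
    [MeasurableSpace E] [BorelSpace E] (μ : Measure E) [μ.IsAddHaarMeasure] (hC : IsClosed C)
    (hne : C.Nonempty) (hu : ContDiff ℝ 1 u) (hu0 : ∀ x ∈ C, u x = 0) {w : ℝ → ℝ≥0∞}
    (hw : Measurable w) :
    ∫⁻ x, ‖u x‖ₑ * w (infDist x C) ∂μ ≤
      ∫⁻ x, ‖fderiv ℝ u x‖ₑ * gradientWeight (finrank ℝ E) w (infDist x C) ∂μ := by
  obtain ⟨p, hp, hpC⟩ := exists_measurable_ae_isNearestPoint μ hC hne
  let G (t : ℝ) (y : E) : ℝ≥0∞ :=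
    ‖fderiv ℝ u y‖ₑ * (ENNReal.ofReal (infDist y C / t) * w (infDist y C / t))
  have measurable_enorm_fderiv : Measurable fun y => ‖fderiv ℝ u y‖ₑ :=
    (hu.continuous_fderiv one_ne_zero).enorm.measurable
  have measurable_ratio : Measurable fun z : ℝ × E => infDist z.2 C / z.1 :=
    ((continuous_infDist_pt C).measurable.comp measurable_snd).div measurable_fst
  have measurable_G : Measurable (Function.uncurry G) :=
    (measurable_enorm_fderiv.comp measurable_snd).mul
      (measurable_ratio.ennreal_ofReal.mul (hw.comp measurable_ratio))
  calc ∫⁻ x, ‖u x‖ₑ * w (infDist x C) ∂μ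
      ≤ ∫⁻ x, (∫⁻ t in Ioc (0 : ℝ) 1, G t (lineMap (p x) x t)) ∂μ :=
        lintegral_mono_ae <| hpC.mono fun x hx =>
          hx.enorm_mul_le_lintegral hu (hu0 _ hx.mem) w
    _ ≤ ∫⁻ y, (∫⁻ t in Ioc (0 : ℝ) 1, ENNReal.ofReal t⁻¹ ^ finrank ℝ E * G t y) ∂μ :=
        lintegral_lintegral_lineMap_le hp hpC measurable_G
    _ = ∫⁻ y, ‖fderiv ℝ u y‖ₑ * gradientWeight (finrank ℝ E) w (infDist y C) ∂μ := by
        refine lintegral_congr fun y => ?_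
        simp only [G, gradientWeight, mul_left_comm _ ‖fderiv ℝ u y‖ₑ]
        exact lintegral_const_mul' _ _ enorm_ne_top

end WeightedHardy

section PowerWeight

variable {m s R r : ℝ}

theorem integral_rpow_mul_rpow (hr : 0 < r) (hR : 0 < R) (hs : m < s) :
    ∫ t in (r / R)..1, r ^ (1 - s) * t ^ (s - m - 1) =
      (r ^ (1 - s) - R ^ (m - s) * r ^ (1 - m)) / (s - m) := by
  rw [intervalIntegral.integral_const_mul, integral_rpow (Or.inl (by linarith)), sub_add_cancel,
    Real.one_rpow, Real.div_rpow hr.le hR.le, ← neg_sub s m, Real.rpow_neg hR.le,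
    show 1 - m = 1 - s + (s - m) by ring, Real.rpow_add hr]
  ring

theorem rpow_sub_mul_rpow_nonneg (hr : 0 < r) (hrR : r ≤ R) (hs : m ≤ s) :
    0 ≤ r ^ (1 - s) - R ^ (m - s) * r ^ (1 - m) := by
  rw [sub_nonneg, show 1 - s = m - s + (1 - m) by ring, Real.rpow_add hr]
  gcongr ?_ * _
  exact Real.rpow_le_rpow_of_nonpos hr hrR (sub_nonpos.2 hs)

theorem gradientWeight_of_nonpos {n : ℕ} {w : ℝ → ℝ≥0∞} (hr : r ≤ 0) :
    gradientWeight n w r = 0 :=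
  setLIntegral_eq_zero measurableSet_Ioc fun t ht => by
    simp [ENNReal.ofReal_of_nonpos (div_nonpos_of_nonpos_of_nonneg hr ht.1.le)]

theorem inv_pow_mul_div_mul_rpow {n : ℕ} {t : ℝ} (hr : 0 < r) (ht : 0 < t) :
    t⁻¹ ^ n * (r / t * (r / t) ^ (-s)) = r ^ (1 - s) * t ^ (s - n - 1) := by
  calc t⁻¹ ^ n * (r / t * (r / t) ^ (-s)) = t⁻¹ ^ n * (r / t) ^ (1 - s) := by
        rw [sub_eq_add_neg 1 s, Real.rpow_add (div_pos hr ht), Real.rpow_one]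
    _ = r ^ (1 - s) * t ^ (s - n - 1) := by
        rw [Real.div_rpow hr.le ht.le, show s - n - 1 = -(1 - s) - n by ring,
          Real.rpow_sub_natCast ht.ne', Real.rpow_neg ht.le]
        ring

theorem gradientWeight_indicator_rpow {n : ℕ} (hr : 0 < r) (hrR : r ≤ R) (hs : n < s) :
    gradientWeight n ((Iic R).indicator fun ρ => ENNReal.ofReal (ρ ^ (-s))) r =
      ENNReal.ofReal ((r ^ (1 - s) - R ^ (n - s) * r ^ (1 - n : ℝ)) / (s - n)) := by
  have hR : 0 < R := hr.trans_le hrR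
  have hr_div_R : 0 < r / R := div_pos hr hR
  have integrand_eq : EqOn
      (fun t => ENNReal.ofReal t⁻¹ ^ n *
        (ENNReal.ofReal (r / t) * (Iic R).indicator (fun ρ => ENNReal.ofReal (ρ ^ (-s))) (r / t)))
      ((Ici (r / R)).indicator fun t => ENNReal.ofReal (r ^ (1 - s) * t ^ (s - n - 1)))
      (Ioc 0 1) := by
    intro t ht
    have ht0 : 0 < t := ht.1
    have mem_iff : r / t ∈ Iic R ↔ t ∈ Ici (r / R) := div_le_comm₀ ht0 hR
    by_cases hmem : t ∈ Ici (r / R)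
    · simp only [indicator_of_mem hmem, indicator_of_mem (mem_iff.2 hmem)]
      rw [← ENNReal.ofReal_pow (by positivity), ← ENNReal.ofReal_mul (by positivity),
        ← ENNReal.ofReal_mul (by positivity), inv_pow_mul_div_mul_rpow hr ht0]
    · simp only [indicator_of_notMem hmem, indicator_of_notMem (mem_iff.not.2 hmem), mul_zero]
  have Ici_inter_Ioc : Ici (r / R) ∩ Ioc 0 1 = Icc (r / R) 1 :=
    Set.ext fun t => ⟨fun h => ⟨h.1, h.2.2⟩, fun h => ⟨h.1, hr_div_R.trans_le h.1, h.2⟩⟩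
  rw [gradientWeight, setLIntegral_congr_fun measurableSet_Ioc integrand_eq,
    setLIntegral_indicator measurableSet_Ici, Ici_inter_Ioc, ← restrict_Ioc_eq_restrict_Icc,
    ← integral_rpow_mul_rpow hr hR hs,
    intervalIntegral.integral_of_le ((div_le_one hR).2 hrR), ofReal_integral_eq_lintegral_ofReal]
  · rw [← IntegrableOn, ← intervalIntegrable_iff_integrableOn_Ioc_of_le ((div_le_one hR).2 hrR)]
    exact (intervalIntegral.intervalIntegrable_rpow' (by linarith)).const_mul _
  · filter_upwards [ae_restrict_mem measurableSet_Ioc] with t ht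
    have : 0 < t := hr_div_R.trans ht.1
    positivity

end PowerWeight

section Integrals

theorem infDist_compl_pos {X : Type*} [PseudoMetricSpace X] {Ω : Set X} (hΩ : IsOpen Ω)
    (hΩuniv : Ω ≠ univ) {x : X} (hx : x ∈ Ω) : 0 < infDist x Ωᶜ :=
  (hΩ.isClosed_compl.notMem_iff_infDist_pos (nonempty_compl.2 hΩuniv)).1 (not_not.2 hx)

theorem integrable_mul_infDist_compl_rpow {X : Type*} [PseudoMetricSpace X] [MeasurableSpace X]
    [OpensMeasurableSpace X] {μ : Measure X} [IsFiniteMeasureOnCompacts μ] {Ω : Set X}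
    (hΩ : IsOpen Ω) (hΩuniv : Ω ≠ univ) {v : X → ℝ} (hv : Continuous v)
    (hvc : HasCompactSupport v) (hvΩ : tsupport v ⊆ Ω) (a : ℝ) :
    Integrable (fun x => v x * infDist x Ωᶜ ^ a) μ := by
  have continuousOn : ContinuousOn (fun x => v x * infDist x Ωᶜ ^ a) Ω :=
    hv.continuousOn.mul <| (continuous_infDist_pt _).continuousOn.rpow_const
      fun x hx => Or.inl (infDist_compl_pos hΩ hΩuniv hx).ne'
  exact (continuousOn.continuous_of_tsupport_subset hΩ
    (tsupport_mul_subset_left.trans hvΩ)).integrable_of_hasCompactSupport hvc.mul_right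

theorem integral_le_integral_of_lintegral_ofReal_le {α : Type*} [MeasurableSpace α]
    {μ : Measure α} {f g : α → ℝ} (hf : Integrable f μ) (hf0 : 0 ≤ᵐ[μ] f) (hg : Integrable g μ)
    (hg0 : 0 ≤ᵐ[μ] g)
    (h : ∫⁻ x, ENNReal.ofReal (f x) ∂μ ≤ ∫⁻ x, ENNReal.ofReal (g x) ∂μ) :
    ∫ x, f x ∂μ ≤ ∫ x, g x ∂μ := by
  rwa [← ofReal_integral_eq_lintegral_ofReal hf hf0, ← ofReal_integral_eq_lintegral_ofReal hg hg0,
    ENNReal.ofReal_le_ofReal_iff (integral_nonneg_of_ae hg0)] at h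

end Integrals

section PowerHardy

variable {E F : Type*} [NormedAddCommGroup E] [InnerProductSpace ℝ E] [FiniteDimensional ℝ E]
  [MeasurableSpace E] [BorelSpace E] [NormedAddCommGroup F] [NormedSpace ℝ F]
  (μ : Measure E) [μ.IsAddHaarMeasure] {Ω : Set E} {R s : ℝ} {u : E → F}

theorem setLIntegral_norm_mul_infDist_rpow_le (hΩ : IsOpen Ω) (hΩuniv : Ω ≠ univ)
    (hR : ∀ x ∈ Ω, infDist x Ωᶜ ≤ R) (hs : finrank ℝ E < s) (hu : ContDiff ℝ 1 u)
    (hu0 : ∀ x ∉ Ω, u x = 0) :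
    ∫⁻ x in Ω, ENNReal.ofReal (‖u x‖ * infDist x Ωᶜ ^ (-s)) ∂μ ≤
      ∫⁻ x in Ω, ENNReal.ofReal (‖fderiv ℝ u x‖ * ((infDist x Ωᶜ ^ (1 - s) -
        R ^ (finrank ℝ E - s) * infDist x Ωᶜ ^ (1 - finrank ℝ E : ℝ)) / (s - finrank ℝ E))) ∂μ := by
  let w : ℝ → ℝ≥0∞ := (Iic R).indicator fun ρ => ENNReal.ofReal (ρ ^ (-s))
  have measurable_w : Measurable w := Measurable.indicator (by fun_prop) measurableSet_Iic
  have support_subset : (fun x => ‖fderiv ℝ u x‖ₑ *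
      gradientWeight (finrank ℝ E) w (infDist x Ωᶜ)).support ⊆ Ω := by
    intro x hx
    by_contra hxΩ
    exact hx (by simp only [infDist_zero_of_mem (mem_compl hxΩ), gradientWeight_of_nonpos le_rfl,
      mul_zero])
  calc ∫⁻ x in Ω, ENNReal.ofReal (‖u x‖ * infDist x Ωᶜ ^ (-s)) ∂μ
      = ∫⁻ x in Ω, ‖u x‖ₑ * w (infDist x Ωᶜ) ∂μ := by
        refine setLIntegral_congr_fun hΩ.measurableSet fun x hx => ?_
        simp only [w, indicator_of_mem (mem_Iic.2 (hR x hx)), ENNReal.ofReal_mul (norm_nonneg _),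
          ofReal_norm]
    _ ≤ ∫⁻ x, ‖u x‖ₑ * w (infDist x Ωᶜ) ∂μ := setLIntegral_le_lintegral _ _
    _ ≤ ∫⁻ x, ‖fderiv ℝ u x‖ₑ * gradientWeight (finrank ℝ E) w (infDist x Ωᶜ) ∂μ :=
        lintegral_enorm_mul_infDist_le μ hΩ.isClosed_compl (nonempty_compl.2 hΩuniv) hu hu0
          measurable_w
    _ = ∫⁻ x in Ω, ‖fderiv ℝ u x‖ₑ * gradientWeight (finrank ℝ E) w (infDist x Ωᶜ) ∂μ :=
        (setLIntegral_eq_of_support_subset support_subset).symm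
    _ = _ := by
        refine setLIntegral_congr_fun hΩ.measurableSet fun x hx => ?_
        simp only [w, gradientWeight_indicator_rpow (infDist_compl_pos hΩ hΩuniv hx) (hR x hx) hs,
          ENNReal.ofReal_mul (norm_nonneg _), ofReal_norm]

theorem integral_norm_mul_infDist_rpow_le (hΩ : IsOpen Ω) (hΩuniv : Ω ≠ univ)
    (hR : ∀ x ∈ Ω, infDist x Ωᶜ ≤ R) (hs : finrank ℝ E < s) (hu : ContDiff ℝ 1 u)
    (huc : HasCompactSupport u) (huΩ : tsupport u ⊆ Ω) :
    ∫ x in Ω, ‖u x‖ * infDist x Ωᶜ ^ (-s) ∂μ ≤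
      ((∫ x in Ω, ‖fderiv ℝ u x‖ * infDist x Ωᶜ ^ (1 - s) ∂μ) -
        R ^ (finrank ℝ E - s) *
          ∫ x in Ω, ‖fderiv ℝ u x‖ * infDist x Ωᶜ ^ (1 - finrank ℝ E : ℝ) ∂μ) /
        (s - finrank ℝ E) := by
  have integrable_u : IntegrableOn (fun x => ‖u x‖ * infDist x Ωᶜ ^ (-s)) Ω μ :=
    (integrable_mul_infDist_compl_rpow hΩ hΩuniv hu.continuous.norm huc.norm
      ((tsupport_comp_subset norm_zero u).trans huΩ) _).integrableOn
  have integrable_fderiv (a : ℝ) :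
      IntegrableOn (fun x => ‖fderiv ℝ u x‖ * infDist x Ωᶜ ^ a) Ω μ :=
    (integrable_mul_infDist_compl_rpow hΩ hΩuniv (hu.continuous_fderiv one_ne_zero).norm
      (huc.fderiv ℝ).norm
      ((tsupport_comp_subset norm_zero _).trans <| (tsupport_fderiv_subset ℝ).trans huΩ)
      _).integrableOn
  have factor (x : E) : (‖fderiv ℝ u x‖ * infDist x Ωᶜ ^ (1 - s) - R ^ (finrank ℝ E - s) *
      (‖fderiv ℝ u x‖ * infDist x Ωᶜ ^ (1 - finrank ℝ E : ℝ))) / (s - finrank ℝ E) =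
      ‖fderiv ℝ u x‖ * ((infDist x Ωᶜ ^ (1 - s) -
        R ^ (finrank ℝ E - s) * infDist x Ωᶜ ^ (1 - finrank ℝ E : ℝ)) / (s - finrank ℝ E)) := by
    ring
  have integrable_remainder := (integrable_fderiv (1 - finrank ℝ E)).const_mul
    (R ^ (finrank ℝ E - s))
  rw [← integral_const_mul, ← integral_sub (integrable_fderiv _) integrable_remainder,
    ← integral_div]
  refine integral_le_integral_of_lintegral_ofReal_le integrable_u ?_
    (((integrable_fderiv _).sub integrable_remainder).div_const _) ?_ ?_
  · exact ae_of_all _ fun x => mul_nonneg (norm_nonneg _) (Real.rpow_nonneg infDist_nonneg _)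
  · filter_upwards [ae_restrict_mem hΩ.measurableSet] with x hx
    rw [factor]
    exact mul_nonneg (norm_nonneg _) <| div_nonneg
      (rpow_sub_mul_rpow_nonneg (infDist_compl_pos hΩ hΩuniv hx) (hR x hx) hs.le)
      (sub_nonneg.2 hs.le)
  · simp only [factor]
    exact setLIntegral_norm_mul_infDist_rpow_le μ hΩ hΩuniv hR hs hu fun x hx =>
      image_eq_zero_of_notMem_tsupport (notMem_subset huΩ hx)

theorem l1_weighted_hardy_gradient_remainder_general (hΩ : IsOpen Ω) (hΩuniv : Ω ≠ univ)
    (hR : ∀ x ∈ Ω, infDist x Ωᶜ ≤ R) (hs : finrank ℝ E < s) (hu : ContDiff ℝ 1 u)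
    (huc : HasCompactSupport u) (huΩ : tsupport u ⊆ Ω) :
    (∫ x in Ω, ‖fderiv ℝ u x‖ / infDist x Ωᶜ ^ (s - 1) ∂μ) -
        (s - finrank ℝ E) * (∫ x in Ω, ‖u x‖ / infDist x Ωᶜ ^ s ∂μ) ≥
      (1 / R ^ (s - finrank ℝ E)) *
        ∫ x in Ω, ‖fderiv ℝ u x‖ / infDist x Ωᶜ ^ ((finrank ℝ E : ℝ) - 1) ∂μ := by
  rcases Ω.eq_empty_or_nonempty with rfl | ⟨x₀, hx₀⟩
  · simp
  have hR0 : 0 ≤ R := infDist_nonneg.trans (hR x₀ hx₀)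
  have hardy := integral_norm_mul_infDist_rpow_le μ hΩ hΩuniv hR hs hu huc huΩ
  rw [le_div_iff₀' (sub_pos.2 hs)] at hardy
  simp only [div_eq_mul_inv, one_mul, ← Real.rpow_neg infDist_nonneg, ← Real.rpow_neg hR0, neg_sub]
  linarith

end PowerHardy

/-- `L^1` weighted Hardy inequality with gradient remainder
on a general open set of finite inner radius. -/
theorem l1_weighted_hardy_gradient_remainder (n : ℕ) (hn : 1 ≤ n)
    (Ω : Set (EuclideanSpace ℝ (Fin n))) (hΩo : IsOpen Ω) (hΩne : Ω.Nonempty)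
    (hΩuniv : Ω ≠ Set.univ)
    (R : ℝ) (hR : IsLUB ((fun x => Metric.infDist x Ωᶜ) '' Ω) R) :
    ∀ s : ℝ, (n : ℝ) < s →
    ∀ u : EuclideanSpace ℝ (Fin n) → ℝ, ContDiff ℝ (⊤ : ℕ∞) u →
      HasCompactSupport u → tsupport u ⊆ Ω →
      (∫ x in Ω, ‖fderiv ℝ u x‖ / (Metric.infDist x Ωᶜ) ^ (s - 1))
          - (s - n) * (∫ x in Ω, |u x| / (Metric.infDist x Ωᶜ) ^ s) ≥
        (1 / R ^ (s - n)) *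
          ∫ x in Ω, ‖fderiv ℝ u x‖ / (Metric.infDist x Ωᶜ) ^ ((n : ℝ) - 1) := by
  intro s hs u hu huc huΩ
  simpa only [finrank_euclideanSpace_fin, Real.norm_eq_abs] using
    l1_weighted_hardy_gradient_remainder_general volume hΩo hΩuniv (forall_mem_image.1 hR.1)
      (by rwa [finrank_euclideanSpace_fin]) (hu.of_le (mod_cast le_top)) huc huΩ
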